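/- Let γ¹,γ²,γ³:[0,1]→ℝ² be regular curves of class H² forming a Theta-network: γ¹(0)=γ²(0)=γ³(0), γ¹(1)=γ²(1)=γ³(1), the two junction points are distinct, and at each of the two junctions the three unit tangent vectors sum to zero (so the curves meet at angles of 120 degrees). Then the penalized elastic energy satisfies F(Γ) = Σ_{i=1}^{3} ∫_{γ^i} ((k^i)² + 1) ds^i ≥ 4π. -/

import Mathlib

/-- A regular planar curve of class `H²`, recorded through its components `x, y`,
their first derivatives `xd, yd` and second derivatives `xdd, ydd` on `[0,1]`,
together with the regularity (non-vanishing speed) and the integrability of the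
(squared and absolute) curvature with respect to arclength. -/
structure RegularCurve where
  x : ℝ → ℝ
  y : ℝ → ℝ
  xd : ℝ → ℝ
  yd : ℝ → ℝ
  xdd : ℝ → ℝ
  ydd : ℝ → ℝ
  hx : ∀ t ∈ Set.Icc (0:ℝ) 1, HasDerivWithinAt x (xd t) (Set.Icc 0 1) t
  hy : ∀ t ∈ Set.Icc (0:ℝ) 1, HasDerivWithinAt y (yd t) (Set.Icc 0 1) t
  hxd : ∀ t ∈ Set.Icc (0:ℝ) 1, HasDerivWithinAt xd (xdd t) (Set.Icc 0 1) t
  hyd : ∀ t ∈ Set.Icc (0:ℝ) 1, HasDerivWithinAt yd (ydd t) (Set.Icc 0 1) t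
  regular : ∀ t ∈ Set.Icc (0:ℝ) 1, xd t ^ 2 + yd t ^ 2 ≠ 0
  intE : IntervalIntegrable
    (fun t => (xd t * ydd t - xdd t * yd t) ^ 2 /
      ((xd t ^ 2 + yd t ^ 2) ^ 2 * Real.sqrt (xd t ^ 2 + yd t ^ 2)))
    MeasureTheory.volume 0 1
  intK : IntervalIntegrable
    (fun t => |xd t * ydd t - xdd t * yd t| / (xd t ^ 2 + yd t ^ 2))
    MeasureTheory.volume 0 1

namespace RegularCurve

/-- The elastic energy `∫ k² ds`, where `k = (x'y'' - x''y')/|γ'|³` is the scalar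
curvature and `ds = |γ'| dx`. -/
noncomputable def elasticEnergy (γ : RegularCurve) : ℝ :=
  ∫ t in (0:ℝ)..1, (γ.xd t * γ.ydd t - γ.xdd t * γ.yd t) ^ 2 /
    ((γ.xd t ^ 2 + γ.yd t ^ 2) ^ 2 * Real.sqrt (γ.xd t ^ 2 + γ.yd t ^ 2))

/-- The length `∫ 1 ds`. -/
noncomputable def length (γ : RegularCurve) : ℝ :=
  ∫ t in (0:ℝ)..1, Real.sqrt (γ.xd t ^ 2 + γ.yd t ^ 2)

/-- The total absolute curvature `∫ |k| ds`. -/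
noncomputable def totalAbsCurvature (γ : RegularCurve) : ℝ :=
  ∫ t in (0:ℝ)..1, |γ.xd t * γ.ydd t - γ.xdd t * γ.yd t| / (γ.xd t ^ 2 + γ.yd t ^ 2)

/-- A curve is closed if `γ(0) = γ(1)` and the unit tangents agree, `τ(0) = τ(1)`. -/
def IsClosedCurve (γ : RegularCurve) : Prop :=
  γ.x 0 = γ.x 1 ∧ γ.y 0 = γ.y 1 ∧
  γ.xd 0 / Real.sqrt (γ.xd 0 ^ 2 + γ.yd 0 ^ 2)
    = γ.xd 1 / Real.sqrt (γ.xd 1 ^ 2 + γ.yd 1 ^ 2) ∧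
  γ.yd 0 / Real.sqrt (γ.xd 0 ^ 2 + γ.yd 0 ^ 2)
    = γ.yd 1 / Real.sqrt (γ.xd 1 ^ 2 + γ.yd 1 ^ 2)

end RegularCurve

/-! For each curve, `k² + 1 ≥ 2|k|` bounds the penalized energy below by twice the total absolute
curvature, which is the length of the path traced by the unit tangent on the circle. Some tangent
is at most as far from the direction `e` of the chord as from any prescribed unit vector `w`,
because otherwise the curve would advance more along `w` than along `e`. Taking `w` to be the
tangent at a suitable intermediate time shows that the total absolute curvature is at least the sum
of the angles which the two end tangents make with `e`. All the curves have the same chord, and at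
each junction the cosines of their angles with `e` sum to zero, so that these angles sum to at
least `π`. -/

open MeasureTheory Set InnerProductGeometry
open scoped RealInnerProductSpace Topology

theorem pi_le_arccos_add_arccos {x y : ℝ} (h : x + y ≤ 0) :
    Real.pi ≤ Real.arccos x + Real.arccos y := by
  have : Real.arccos (-y) ≤ Real.arccos x := Real.arccos_le_arccos (by linarith)
  rw [Real.arccos_neg] at this
  linarith

theorem exists_ne_add_nonpos_of_sum_nonpos {ι : Type*} [Fintype ι] [Nontrivial ι] {a : ι → ℝ}
    (h : ∑ i, a i ≤ 0) : ∃ i j, i ≠ j ∧ a i + a j ≤ 0 := by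
  classical
  obtain ⟨i, -, hi⟩ : ∃ i ∈ Finset.univ, a i ≤ 0 :=
    Finset.exists_le_of_sum_le Finset.univ_nonempty (by simpa using h)
  obtain ⟨j, hji⟩ := exists_ne i
  by_contra! hpos
  have hle : a j ≤ ∑ k ∈ Finset.univ.erase i, a k :=
    Finset.single_le_sum
      (fun k hk => by linarith [hpos i k (Finset.ne_of_mem_erase hk).symm])
      (Finset.mem_erase.2 ⟨hji, Finset.mem_univ j⟩)
  have hsum := Finset.add_sum_erase Finset.univ a (Finset.mem_univ i)
  linarith [hpos i j hji.symm]

theorem pi_le_sum_arccos {ι : Type*} [Fintype ι] [Nontrivial ι] {a : ι → ℝ}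
    (h : ∑ i, a i ≤ 0) : Real.pi ≤ ∑ i, Real.arccos (a i) := by
  classical
  obtain ⟨i, j, hij, hle⟩ := exists_ne_add_nonpos_of_sum_nonpos h
  calc Real.pi ≤ Real.arccos (a i) + Real.arccos (a j) := pi_le_arccos_add_arccos hle
    _ = ∑ k ∈ {i, j}, Real.arccos (a k) :=
      (Finset.sum_pair (f := fun k => Real.arccos (a k)) hij).symm
    _ ≤ ∑ k, Real.arccos (a k) :=
      Finset.sum_le_univ_sum_of_nonneg fun k => Real.arccos_nonneg (a k)

section InnerProductSpace

variable {V : Type*} [NormedAddCommGroup V] [InnerProductSpace ℝ V]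

theorem pi_le_sum_angle_of_sum_eq_zero {ι : Type*} [Fintype ι] [Nontrivial ι] {u : ι → V}
    (hu : ∀ i, ‖u i‖ = 1) (hsum : ∑ i, u i = 0) (e : V) :
    Real.pi ≤ ∑ i, angle (u i) e := by
  refine pi_le_sum_arccos (le_of_eq ?_)
  simp only [hu, one_mul]
  rw [← Finset.sum_div, ← sum_inner, hsum, inner_zero_left, zero_div]

theorem inner_le_inner_of_sameRay {x e w : V} (h : SameRay ℝ x e) (hw : ‖w‖ ≤ ‖e‖) :
    ⟪x, w⟫ ≤ ⟪x, e⟫ := by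
  have hxe : ⟪x, e⟫ = ‖x‖ * ‖e‖ := inner_eq_norm_mul_iff_real.2 h.norm_smul_eq.symm
  calc ⟪x, w⟫ ≤ ‖x‖ * ‖w‖ := real_inner_le_norm x w
    _ ≤ ‖x‖ * ‖e‖ := by gcongr
    _ = ⟪x, e⟫ := hxe.symm

theorem angle_le_angle_of_inner_le_inner {x e w : V} (hew : ‖e‖ = ‖w‖) (h : ⟪x, w⟫ ≤ ⟪x, e⟫) :
    angle x e ≤ angle x w := by
  unfold angle
  rw [hew]
  gcongr

theorem exists_inner_le_inner_of_sameRay {γ v : ℝ → V} {a b : ℝ} {e w : V} (hab : a < b)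
    (hcont : ContinuousOn γ (Icc a b)) (hderiv : ∀ t ∈ Ioo a b, HasDerivAt γ (v t) t)
    (hchord : SameRay ℝ (γ b - γ a) e) (hw : ‖w‖ ≤ ‖e‖) :
    ∃ s ∈ Ioo a b, ⟪v s, w⟫ ≤ ⟪v s, e⟫ := by
  obtain ⟨s, hs, hslope⟩ := exists_hasDerivAt_eq_slope (fun t => ⟪γ t, w - e⟫)
    (fun t => ⟪v t, w - e⟫) hab (hcont.inner continuousOn_const)
    (fun t ht => by simpa using (hderiv t ht).inner ℝ (hasDerivAt_const t (w - e)))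
  refine ⟨s, hs, sub_nonpos.1 ?_⟩
  rw [← inner_sub_right, hslope, ← inner_sub_left]
  refine div_nonpos_of_nonpos_of_nonneg ?_ (sub_nonneg.2 hab.le)
  rw [inner_sub_right]
  exact sub_nonpos.2 (inner_le_inner_of_sameRay hchord hw)

theorem inner_eq_zero_of_hasDerivAt_of_norm_eventually_eq_const {τ : ℝ → V} {τ' : V} {t r : ℝ}
    (hτ : HasDerivAt τ τ' t) (hnorm : ∀ᶠ s in 𝓝 t, ‖τ s‖ = r) : ⟪τ t, τ'⟫ = 0 := by
  have hconst : (fun s => ‖τ s‖ ^ 2) =ᶠ[𝓝 t] fun _ => r ^ 2 := by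
    filter_upwards [hnorm] with s hs
    rw [hs]
  have h := hτ.norm_sq.unique ((hasDerivAt_const t (r ^ 2)).congr_of_eventuallyEq hconst)
  linarith

theorem abs_inner_le_of_inner_eq_zero {e x y : V} (he : ‖e‖ ≤ 1) (hx : ‖x‖ = 1)
    (hxy : ⟪x, y⟫ = 0) : |⟪e, y⟫| ≤ √(1 - ⟪e, x⟫ ^ 2) * ‖y‖ := by
  have hproj : ⟪e, y⟫ = ⟪e - ⟪e, x⟫ • x, y⟫ := by
    rw [inner_sub_left, real_inner_smul_left, hxy, mul_zero, sub_zero]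
  have hnorm : ‖e - ⟪e, x⟫ • x‖ ^ 2 = ‖e‖ ^ 2 - ⟪e, x⟫ ^ 2 := by
    rw [norm_sub_sq_real, real_inner_smul_right, norm_smul, hx, mul_one, Real.norm_eq_abs, sq_abs]
    ring
  calc |⟪e, y⟫| ≤ ‖e - ⟪e, x⟫ • x‖ * ‖y‖ := hproj ▸ abs_real_inner_le_norm _ y
    _ ≤ √(1 - ⟪e, x⟫ ^ 2) * ‖y‖ := by
      gcongr
      refine Real.le_sqrt_of_sq_le ?_
      rw [hnorm]
      gcongr
      exact pow_le_one₀ (norm_nonneg e) he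

theorem exists_hasDerivAt_arccos_inner_le {τ : ℝ → V} {τ' e : V} {t : ℝ}
    (hτ : HasDerivAt τ τ' t) (hnorm : ∀ᶠ s in 𝓝 t, ‖τ s‖ = 1) (he : ‖e‖ < 1) :
    ∃ d ≤ ‖τ'‖, HasDerivAt (fun s => Real.arccos ⟪e, τ s⟫) d t := by
  have hτt : ‖τ t‖ = 1 := hnorm.self_of_nhds
  have hlt : |⟪e, τ t⟫| < 1 :=
    (abs_real_inner_le_norm e (τ t)).trans_lt (by rwa [hτt, mul_one])
  obtain ⟨hgt, hlt'⟩ := abs_lt.1 hlt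
  have hinner : HasDerivAt (fun s => ⟪e, τ s⟫) ⟪e, τ'⟫ t := by
    simpa using (hasDerivAt_const t e).inner ℝ hτ
  refine ⟨_, ?_, (Real.hasDerivAt_arccos hgt.ne' hlt'.ne).comp (h₂ := Real.arccos) t hinner⟩
  have hsqrt : 0 < √(1 - ⟪e, τ t⟫ ^ 2) := Real.sqrt_pos.2 (by nlinarith)
  have hbound := abs_inner_le_of_inner_eq_zero he.le hτt
    (inner_eq_zero_of_hasDerivAt_of_norm_eventually_eq_const hτ hnorm)
  calc -(1 / √(1 - ⟪e, τ t⟫ ^ 2)) * ⟪e, τ'⟫ = -⟪e, τ'⟫ / √(1 - ⟪e, τ t⟫ ^ 2) := by ring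
    _ ≤ ‖τ'‖ := (div_le_iff₀' hsqrt).2 ((neg_le_abs _).trans hbound)

/-- `τ` is a path on the unit sphere over `[a, b]`, with derivative `τ'` in the interior and
integrable speed `‖τ'‖`. It models the unit tangent of a curve, the integral of `‖τ'‖` being the
total absolute curvature of that curve. -/
structure IsUnitPathOn (τ τ' : ℝ → V) (a b : ℝ) : Prop where
  continuousOn : ContinuousOn τ (Icc a b)
  hasDerivAt : ∀ t ∈ Ioo a b, HasDerivAt τ (τ' t) t
  norm_eq_one : ∀ t ∈ Icc a b, ‖τ t‖ = 1
  intervalIntegrable : IntervalIntegrable (fun t => ‖τ' t‖) volume a b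

namespace IsUnitPathOn

variable {τ τ' : ℝ → V} {a b c d : ℝ} {e : V}

theorem mono (h : IsUnitPathOn τ τ' a b) (hac : a ≤ c) (hcd : c ≤ d) (hdb : d ≤ b) :
    IsUnitPathOn τ τ' c d where
  continuousOn := h.continuousOn.mono (Icc_subset_Icc hac hdb)
  hasDerivAt t ht := h.hasDerivAt t (Ioo_subset_Ioo hac hdb ht)
  norm_eq_one t ht := h.norm_eq_one t (Icc_subset_Icc hac hdb ht)
  intervalIntegrable := h.intervalIntegrable.mono_set <| by
    rw [uIcc_of_le hcd, uIcc_of_le (hac.trans (hcd.trans hdb))]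
    exact Icc_subset_Icc hac hdb

theorem integral_add_integral (h : IsUnitPathOn τ τ' a b) (hac : a ≤ c) (hcb : c ≤ b) :
    (∫ t in a..c, ‖τ' t‖) + ∫ t in c..b, ‖τ' t‖ = ∫ t in a..b, ‖τ' t‖ :=
  intervalIntegral.integral_add_adjacent_intervals
    (h.mono le_rfl hac hcb).intervalIntegrable (h.mono hac hcb le_rfl).intervalIntegrable

-- Keeping `e` inside the open ball avoids the points `±1`, where `arccos` is not differentiable.
theorem arccos_inner_sub_le_integral_of_norm_lt_one (h : IsUnitPathOn τ τ' a b) (hab : a ≤ b)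
    (he : ‖e‖ < 1) :
    Real.arccos ⟪e, τ b⟫ - Real.arccos ⟪e, τ a⟫ ≤ ∫ t in a..b, ‖τ' t‖ := by
  have hderiv : ∀ t ∈ Ioo a b,
      ∃ d ≤ ‖τ' t‖, HasDerivAt (fun s => Real.arccos ⟪e, τ s⟫) d t := fun t ht =>
    exists_hasDerivAt_arccos_inner_le (h.hasDerivAt t ht)
      (Filter.mem_of_superset (Icc_mem_nhds ht.1 ht.2) h.norm_eq_one) he
  choose! d hle hd using hderiv
  exact intervalIntegral.sub_le_integral_of_hasDeriv_right_of_le hab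
    (Real.continuous_arccos.comp_continuousOn (continuousOn_const.inner h.continuousOn))
    (fun t ht => (hd t ht).hasDerivWithinAt)
    ((intervalIntegrable_iff_integrableOn_Icc_of_le hab).1 h.intervalIntegrable) hle

theorem arccos_inner_sub_le_integral (h : IsUnitPathOn τ τ' a b) (hab : a ≤ b) (he : ‖e‖ ≤ 1) :
    Real.arccos ⟪e, τ b⟫ - Real.arccos ⟪e, τ a⟫ ≤ ∫ t in a..b, ‖τ' t‖ := by
  have hclosed : IsClosed
      {e : V | Real.arccos ⟪e, τ b⟫ - Real.arccos ⟪e, τ a⟫ ≤ ∫ t in a..b, ‖τ' t‖} := by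
    have := Real.continuous_arccos
    exact isClosed_le (by fun_prop) continuous_const
  have hball : Metric.closedBall (0 : V) 1 ⊆
      {e : V | Real.arccos ⟪e, τ b⟫ - Real.arccos ⟪e, τ a⟫ ≤ ∫ t in a..b, ‖τ' t‖} := by
    rw [← closure_ball (0 : V) one_ne_zero]
    exact closure_minimal (fun e he => h.arccos_inner_sub_le_integral_of_norm_lt_one hab
      (mem_ball_zero_iff.1 he)) hclosed
  exact hball (mem_closedBall_zero_iff.2 he)

theorem angle_le_integral (h : IsUnitPathOn τ τ' a b) (hab : a ≤ b) :
    angle (τ a) (τ b) ≤ ∫ t in a..b, ‖τ' t‖ := by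
  have ha := h.norm_eq_one a (left_mem_Icc.2 hab)
  have hb := h.norm_eq_one b (right_mem_Icc.2 hab)
  simpa [angle, ha, hb] using h.arccos_inner_sub_le_integral hab ha.le

theorem angle_le_integral_or_of_angle_le {s : ℝ} (h : IsUnitPathOn τ τ' a b)
    (hc : c ∈ Icc a b) (hs : s ∈ Icc a b) (hangle : angle (τ s) e ≤ angle (τ s) (τ c)) :
    angle (τ a) e ≤ ∫ t in a..c, ‖τ' t‖ ∨ angle (τ b) e ≤ ∫ t in c..b, ‖τ' t‖ := by
  rcases le_total s c with hsc | hcs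
  · left
    have hac := h.mono le_rfl hc.1 hc.2
    calc angle (τ a) e ≤ angle (τ a) (τ s) + angle (τ s) (τ c) :=
          (angle_le_angle_add_angle _ _ _).trans (by gcongr)
      _ ≤ (∫ t in a..s, ‖τ' t‖) + ∫ t in s..c, ‖τ' t‖ :=
          add_le_add ((hac.mono le_rfl hs.1 hsc).angle_le_integral hs.1)
            ((hac.mono hs.1 hsc le_rfl).angle_le_integral hsc)
      _ = ∫ t in a..c, ‖τ' t‖ := hac.integral_add_integral hs.1 hsc
  · right
    have hcb := h.mono hc.1 hc.2 le_rfl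
    calc angle (τ b) e ≤ angle (τ c) (τ s) + angle (τ s) (τ b) := by
          rw [angle_comm (τ c), angle_comm (τ s) (τ b), add_comm]
          exact (angle_le_angle_add_angle _ _ _).trans (by gcongr)
      _ ≤ (∫ t in c..s, ‖τ' t‖) + ∫ t in s..b, ‖τ' t‖ :=
          add_le_add ((hcb.mono le_rfl hcs hs.2).angle_le_integral hcs)
            ((hcb.mono hcs hs.2 le_rfl).angle_le_integral hs.2)
      _ = ∫ t in c..b, ‖τ' t‖ := hcb.integral_add_integral hcs hs.2

theorem exists_integral_eq (h : IsUnitPathOn τ τ' a b) (hab : a ≤ b) {y : ℝ} (hy₀ : 0 ≤ y)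
    (hy : y ≤ ∫ t in a..b, ‖τ' t‖) : ∃ c ∈ Icc a b, ∫ t in a..c, ‖τ' t‖ = y := by
  have hcont : ContinuousOn (fun c => ∫ t in a..c, ‖τ' t‖) (Icc a b) := by
    rw [← uIcc_of_le hab]
    exact intervalIntegral.continuousOn_primitive_interval' h.intervalIntegrable left_mem_uIcc
  exact intermediate_value_Icc hab hcont ⟨by rwa [intervalIntegral.integral_same], hy⟩

theorem angle_add_angle_le_integral {γ : ℝ → V} {r : ℝ → ℝ} (h : IsUnitPathOn τ τ' a b)
    (hab : a < b) (hγ : ContinuousOn γ (Icc a b))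
    (hγ' : ∀ t ∈ Ioo a b, HasDerivAt γ (r t • τ t) t) (hr : ∀ t ∈ Ioo a b, 0 < r t)
    (he : ‖e‖ = 1) (hchord : SameRay ℝ (γ b - γ a) e) :
    angle (τ a) e + angle (τ b) e ≤ ∫ t in a..b, ‖τ' t‖ := by
  set L := ∫ t in a..b, ‖τ' t‖
  have hdist : angle (τ a) (τ b) ≤ L := h.angle_le_integral hab.le
  have hαβ : angle (τ a) e ≤ angle (τ a) (τ b) + angle (τ b) e := angle_le_angle_add_angle _ _ _
  have hβα : angle (τ b) e ≤ angle (τ a) (τ b) + angle (τ a) e :=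
    angle_comm (τ b) (τ a) ▸ angle_le_angle_add_angle _ _ _
  -- At this `c` each alternative of `angle_le_integral_or_of_angle_le` is equivalent to the claim.
  obtain ⟨c, hc, hac⟩ : ∃ c ∈ Icc a b,
      ∫ t in a..c, ‖τ' t‖ = (L + angle (τ a) e - angle (τ b) e) / 2 :=
    h.exists_integral_eq hab.le (by linarith) (by linarith)
  have hadd := h.integral_add_integral hc.1 hc.2
  have hec : ‖e‖ = ‖τ c‖ := by rw [he, h.norm_eq_one c hc]
  obtain ⟨s, hs, hinner⟩ : ∃ s ∈ Ioo a b, ⟪r s • τ s, τ c⟫ ≤ ⟪r s • τ s, e⟫ :=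
    exists_inner_le_inner_of_sameRay hab hγ hγ' hchord hec.ge
  rw [real_inner_smul_left, real_inner_smul_left] at hinner
  have hangle : angle (τ s) e ≤ angle (τ s) (τ c) :=
    angle_le_angle_of_inner_le_inner hec (le_of_mul_le_mul_left hinner (hr s hs))
  rcases h.angle_le_integral_or_of_angle_le hc (Ioo_subset_Icc_self hs) hangle with hα | hβ <;>
    linarith

end IsUnitPathOn

end InnerProductSpace

theorem two_mul_abs_le_sq_div_add {x s : ℝ} (hs : 0 < s) : 2 * |x| ≤ x ^ 2 / s + s := by
  have h : 0 ≤ (|x| - s) ^ 2 / s := by positivity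
  have hexpand : (|x| - s) ^ 2 / s = x ^ 2 / s + s - 2 * |x| := by
    rw [← sq_abs x]
    field_simp
    ring
  linarith

theorem exists_norm_eq_one_sameRay (z : ℂ) : ∃ e : ℂ, ‖e‖ = 1 ∧ SameRay ℝ z e := by
  refine ⟨Complex.exp (z.arg * Complex.I), Complex.norm_exp_ofReal_mul_I _, ?_⟩
  have h : SameRay ℝ (‖z‖ • Complex.exp (z.arg * Complex.I)) (Complex.exp (z.arg * Complex.I)) :=
    SameRay.sameRay_nonneg_smul_left _ (norm_nonneg z)
  rwa [Complex.real_smul, Complex.norm_mul_exp_arg_mul_I] at h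

theorem hasDerivWithinAt_complex_mk {f g : ℝ → ℝ} {f' g' t : ℝ} {s : Set ℝ}
    (hf : HasDerivWithinAt f f' s t) (hg : HasDerivWithinAt g g' s t) :
    HasDerivWithinAt (fun u => (⟨f u, g u⟩ : ℂ)) ⟨f', g'⟩ s t := by
  simp only [Complex.mk_eq_add_mul_I]
  exact hf.ofReal_comp.add (hg.ofReal_comp.mul_const Complex.I)

theorem hasDerivWithinAt_div_sqrt_sq_add_sq {f g : ℝ → ℝ} {f' g' t : ℝ} {s : Set ℝ}
    (hf : HasDerivWithinAt f f' s t) (hg : HasDerivWithinAt g g' s t)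
    (h : f t ^ 2 + g t ^ 2 ≠ 0) :
    HasDerivWithinAt (fun u => f u / √(f u ^ 2 + g u ^ 2))
      (-((f t * g' - f' * g t) / (f t ^ 2 + g t ^ 2) * (g t / √(f t ^ 2 + g t ^ 2)))) s t := by
  have hpos : 0 < f t ^ 2 + g t ^ 2 := lt_of_le_of_ne (by positivity) h.symm
  have hsq : √(f t ^ 2 + g t ^ 2) ^ 2 = f t ^ 2 + g t ^ 2 := Real.sq_sqrt hpos.le
  have hsqrt : √(f t ^ 2 + g t ^ 2) ≠ 0 := (Real.sqrt_pos.2 hpos).ne'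
  have hnorm : HasDerivWithinAt (fun u => √(f u ^ 2 + g u ^ 2))
      ((f t * f' + g t * g') / √(f t ^ 2 + g t ^ 2)) s t := by
    refine (((hf.pow 2).add (hg.pow 2)).sqrt h).congr_deriv ?_
    simp only [Pi.add_apply, Pi.pow_apply]
    field_simp
    push_cast
    ring
  refine (hf.div hnorm hsqrt).congr_deriv ?_
  field_simp
  rw [hsq]
  ring

namespace RegularCurve

/-- The point `γ(t)`, with the plane identified with `ℂ`. -/
def position (γ : RegularCurve) (t : ℝ) : ℂ := ⟨γ.x t, γ.y t⟩

/-- The chord `γ(1) - γ(0)`, as a complex number. -/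
def chord (γ : RegularCurve) : ℂ := γ.position 1 - γ.position 0

/-- The speed `|γ'|`. -/
noncomputable def speed (γ : RegularCurve) (t : ℝ) : ℝ := √(γ.xd t ^ 2 + γ.yd t ^ 2)

/-- The unit tangent `τ = γ' / |γ'|`, as a complex number. -/
noncomputable def unitTangent (γ : RegularCurve) (t : ℝ) : ℂ :=
  ⟨γ.xd t / γ.speed t, γ.yd t / γ.speed t⟩

/-- The derivative `k |γ'|` of the angle of the tangent with respect to the parameter, where `k` is
the scalar curvature. -/
noncomputable def turningRate (γ : RegularCurve) (t : ℝ) : ℝ :=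
  (γ.xd t * γ.ydd t - γ.xdd t * γ.yd t) / (γ.xd t ^ 2 + γ.yd t ^ 2)

variable (γ : RegularCurve) {t : ℝ}

theorem speed_sq (t : ℝ) : γ.speed t ^ 2 = γ.xd t ^ 2 + γ.yd t ^ 2 :=
  Real.sq_sqrt (by positivity)

theorem speed_pos (ht : t ∈ Icc (0 : ℝ) 1) : 0 < γ.speed t :=
  Real.sqrt_pos.2 (lt_of_le_of_ne (by positivity) (γ.regular t ht).symm)

theorem continuousOn_speed : ContinuousOn γ.speed (Icc 0 1) :=
  ((ContinuousOn.pow (fun t ht => (γ.hxd t ht).continuousWithinAt) 2).add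
    (ContinuousOn.pow (fun t ht => (γ.hyd t ht).continuousWithinAt) 2)).sqrt

theorem abs_turningRate (t : ℝ) : |γ.turningRate t| =
    |γ.xd t * γ.ydd t - γ.xdd t * γ.yd t| / (γ.xd t ^ 2 + γ.yd t ^ 2) := by
  rw [turningRate, abs_div, ← γ.speed_sq, abs_sq]

theorem turningRate_sq_div_speed (t : ℝ) : γ.turningRate t ^ 2 / γ.speed t =
    (γ.xd t * γ.ydd t - γ.xdd t * γ.yd t) ^ 2 /
      ((γ.xd t ^ 2 + γ.yd t ^ 2) ^ 2 * √(γ.xd t ^ 2 + γ.yd t ^ 2)) := by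
  rw [turningRate, div_pow, div_div, speed]

theorem intervalIntegrable_abs_turningRate :
    IntervalIntegrable (fun t => |γ.turningRate t|) volume 0 1 := by
  simpa only [abs_turningRate] using γ.intK

theorem intervalIntegrable_turningRate_sq_div_speed :
    IntervalIntegrable (fun t => γ.turningRate t ^ 2 / γ.speed t) volume 0 1 := by
  simpa only [turningRate_sq_div_speed] using γ.intE

theorem totalAbsCurvature_eq_integral_abs_turningRate :
    γ.totalAbsCurvature = ∫ t in (0 : ℝ)..1, |γ.turningRate t| := by
  simp only [abs_turningRate, totalAbsCurvature]

theorem elasticEnergy_eq_integral_turningRate_sq_div_speed :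
    γ.elasticEnergy = ∫ t in (0 : ℝ)..1, γ.turningRate t ^ 2 / γ.speed t := by
  simp only [turningRate_sq_div_speed, elasticEnergy]

theorem length_eq_integral_speed : γ.length = ∫ t in (0 : ℝ)..1, γ.speed t := rfl

theorem two_mul_totalAbsCurvature_le_elasticEnergy_add_length :
    2 * γ.totalAbsCurvature ≤ γ.elasticEnergy + γ.length := by
  have hspeed : IntervalIntegrable γ.speed volume 0 1 :=
    γ.continuousOn_speed.intervalIntegrable_of_Icc zero_le_one
  rw [totalAbsCurvature_eq_integral_abs_turningRate,
    elasticEnergy_eq_integral_turningRate_sq_div_speed, length_eq_integral_speed,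
    ← intervalIntegral.integral_add γ.intervalIntegrable_turningRate_sq_div_speed hspeed,
    ← intervalIntegral.integral_const_mul]
  exact intervalIntegral.integral_mono_on zero_le_one
    (γ.intervalIntegrable_abs_turningRate.const_mul 2)
    (γ.intervalIntegrable_turningRate_sq_div_speed.add hspeed)
    fun t ht => two_mul_abs_le_sq_div_add (γ.speed_pos ht)

theorem norm_unitTangent (ht : t ∈ Icc (0 : ℝ) 1) : ‖γ.unitTangent t‖ = 1 := by
  have hspeed : γ.speed t ^ 2 ≠ 0 := pow_ne_zero 2 (γ.speed_pos ht).ne'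
  rw [unitTangent, Complex.norm_eq_sqrt_sq_add_sq, div_pow, div_pow, ← add_div, ← γ.speed_sq,
    div_self hspeed, Real.sqrt_one]

theorem hasDerivWithinAt_position (ht : t ∈ Icc (0 : ℝ) 1) :
    HasDerivWithinAt γ.position (γ.speed t • γ.unitTangent t) (Icc 0 1) t := by
  have h := (γ.speed_pos ht).ne'
  refine (hasDerivWithinAt_complex_mk (γ.hx t ht) (γ.hy t ht)).congr_deriv ?_
  apply Complex.ext <;> simp [unitTangent, mul_div_cancel₀ _ h]

theorem hasDerivWithinAt_unitTangent (ht : t ∈ Icc (0 : ℝ) 1) :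
    HasDerivWithinAt γ.unitTangent (γ.turningRate t • (Complex.I * γ.unitTangent t))
      (Icc 0 1) t := by
  have hx := hasDerivWithinAt_div_sqrt_sq_add_sq (γ.hxd t ht) (γ.hyd t ht) (γ.regular t ht)
  have hy := hasDerivWithinAt_div_sqrt_sq_add_sq (γ.hyd t ht) (γ.hxd t ht)
    (by rw [add_comm]; exact γ.regular t ht)
  simp only [add_comm (γ.yd _ ^ 2)] at hy
  refine (hasDerivWithinAt_complex_mk hx hy).congr_deriv ?_
  apply Complex.ext <;>
    simp only [unitTangent, turningRate, speed, Complex.smul_re, Complex.smul_im, Complex.I_mul_re,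
      Complex.I_mul_im, smul_eq_mul] <;>
    ring

theorem norm_turningRate_smul_I_mul_unitTangent (ht : t ∈ Icc (0 : ℝ) 1) :
    ‖γ.turningRate t • (Complex.I * γ.unitTangent t)‖ = |γ.turningRate t| := by
  rw [norm_smul, norm_mul, Complex.norm_I, γ.norm_unitTangent ht, mul_one, mul_one,
    Real.norm_eq_abs]

theorem integral_norm_turningRate_smul_I_mul_unitTangent :
    ∫ t in (0 : ℝ)..1, ‖γ.turningRate t • (Complex.I * γ.unitTangent t)‖ =
      γ.totalAbsCurvature := by
  rw [totalAbsCurvature_eq_integral_abs_turningRate]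
  refine intervalIntegral.integral_congr fun t ht => ?_
  rw [uIcc_of_le zero_le_one] at ht
  exact γ.norm_turningRate_smul_I_mul_unitTangent ht

theorem isUnitPathOn_unitTangent :
    IsUnitPathOn γ.unitTangent (fun t => γ.turningRate t • (Complex.I * γ.unitTangent t)) 0 1 where
  continuousOn t ht := (γ.hasDerivWithinAt_unitTangent ht).continuousWithinAt
  hasDerivAt t ht := (γ.hasDerivWithinAt_unitTangent (Ioo_subset_Icc_self ht)).hasDerivAt
    (Icc_mem_nhds ht.1 ht.2)
  norm_eq_one _ ht := γ.norm_unitTangent ht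
  intervalIntegrable := γ.intervalIntegrable_abs_turningRate.congr fun t ht => by
    rw [uIoc_of_le zero_le_one] at ht
    exact (γ.norm_turningRate_smul_I_mul_unitTangent (Ioc_subset_Icc_self ht)).symm

theorem angle_add_angle_le_totalAbsCurvature {e : ℂ} (he : ‖e‖ = 1)
    (hchord : SameRay ℝ γ.chord e) :
    angle (γ.unitTangent 0) e + angle (γ.unitTangent 1) e ≤ γ.totalAbsCurvature := by
  rw [← integral_norm_turningRate_smul_I_mul_unitTangent]
  exact γ.isUnitPathOn_unitTangent.angle_add_angle_le_integral zero_lt_one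
    (fun t ht => (γ.hasDerivWithinAt_position ht).continuousWithinAt)
    (fun t ht => (γ.hasDerivWithinAt_position (Ioo_subset_Icc_self ht)).hasDerivAt
      (Icc_mem_nhds ht.1 ht.2))
    (fun t ht => γ.speed_pos (Ioo_subset_Icc_self ht)) he hchord

theorem sum_unitTangent_eq_zero {ι : Type*} [Fintype ι] {Γ : ι → RegularCurve}
    (hx : ∑ i, (Γ i).xd t / √((Γ i).xd t ^ 2 + (Γ i).yd t ^ 2) = 0)
    (hy : ∑ i, (Γ i).yd t / √((Γ i).xd t ^ 2 + (Γ i).yd t ^ 2) = 0) :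
    ∑ i, (Γ i).unitTangent t = 0 := by
  apply Complex.ext <;> simpa [unitTangent, speed]

end RegularCurve

/-- Two unit semicircles forming a circle attain equality; for two curves this is the consequence of
Fenchel's theorem for closed curves. -/
theorem theta_network_penalized_energy_ge_four_pi_general {ι : Type*} [Fintype ι] [Nontrivial ι]
    (Γ : ι → RegularCurve) (hchord : ∀ i j, (Γ i).chord = (Γ j).chord)
    (htan0 : ∑ i, (Γ i).unitTangent 0 = 0) (htan1 : ∑ i, (Γ i).unitTangent 1 = 0) :
    4 * Real.pi ≤ ∑ i, ((Γ i).elasticEnergy + (Γ i).length) := by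
  obtain ⟨i₀⟩ := Nontrivial.to_nonempty (α := ι)
  obtain ⟨e, he, hray⟩ := exists_norm_eq_one_sameRay (Γ i₀).chord
  have hangle0 : Real.pi ≤ ∑ i, angle ((Γ i).unitTangent 0) e :=
    pi_le_sum_angle_of_sum_eq_zero (fun i => (Γ i).norm_unitTangent (by simp)) htan0 e
  have hangle1 : Real.pi ≤ ∑ i, angle ((Γ i).unitTangent 1) e :=
    pi_le_sum_angle_of_sum_eq_zero (fun i => (Γ i).norm_unitTangent (by simp)) htan1 e
  calc 4 * Real.pi
      ≤ 2 * ((∑ i, angle ((Γ i).unitTangent 0) e) + ∑ i, angle ((Γ i).unitTangent 1) e) := by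
        linarith
    _ = ∑ i, 2 * (angle ((Γ i).unitTangent 0) e + angle ((Γ i).unitTangent 1) e) := by
        rw [← Finset.sum_add_distrib, Finset.mul_sum]
    _ ≤ ∑ i, 2 * (Γ i).totalAbsCurvature := by
        gcongr with i
        exact (Γ i).angle_add_angle_le_totalAbsCurvature he (hchord i₀ i ▸ hray)
    _ ≤ ∑ i, ((Γ i).elasticEnergy + (Γ i).length) :=
        Finset.sum_le_sum fun i _ => (Γ i).two_mul_totalAbsCurvature_le_elasticEnergy_add_length

/-- Let `γ¹, γ², γ³ : [0,1] → ℝ²` be regular curves of class `H^2`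
forming a Theta-network: they share both endpoints (two distinct triple junctions),
and at each junction the three unit tangent vectors sum to zero (`120`-degree angles).
Then the penalized elastic energy satisfies
`F(Γ) = Σ ∫ ((k^i)² + 1) ds^i ≥ 4π`. -/
theorem theta_network_penalized_energy_ge_four_pi (Γ : Fin 3 → RegularCurve)
    (hjunc0x : ∀ i j, (Γ i).x 0 = (Γ j).x 0)
    (hjunc0y : ∀ i j, (Γ i).y 0 = (Γ j).y 0)
    (hjunc1x : ∀ i j, (Γ i).x 1 = (Γ j).x 1)
    (hjunc1y : ∀ i j, (Γ i).y 1 = (Γ j).y 1)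
    (hdistinct : ((Γ 0).x 0, (Γ 0).y 0) ≠ ((Γ 0).x 1, (Γ 0).y 1))
    (htan0x : ∑ i : Fin 3,
      (Γ i).xd 0 / Real.sqrt ((Γ i).xd 0 ^ 2 + (Γ i).yd 0 ^ 2) = 0)
    (htan0y : ∑ i : Fin 3,
      (Γ i).yd 0 / Real.sqrt ((Γ i).xd 0 ^ 2 + (Γ i).yd 0 ^ 2) = 0)
    (htan1x : ∑ i : Fin 3,
      (Γ i).xd 1 / Real.sqrt ((Γ i).xd 1 ^ 2 + (Γ i).yd 1 ^ 2) = 0)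
    (htan1y : ∑ i : Fin 3,
      (Γ i).yd 1 / Real.sqrt ((Γ i).xd 1 ^ 2 + (Γ i).yd 1 ^ 2) = 0) :
    4 * Real.pi ≤ ∑ i : Fin 3, ((Γ i).elasticEnergy + (Γ i).length) :=
  theta_network_penalized_energy_ge_four_pi_general Γ
    (fun i j => by simp [RegularCurve.chord, RegularCurve.position, hjunc0x i j, hjunc0y i j,
      hjunc1x i j, hjunc1y i j])
    (RegularCurve.sum_unitTangent_eq_zero htan0x htan0y)
    (RegularCurve.sum_unitTangent_eq_zero htan1x htan1y)
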